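/- Let $0 < p \le 1$ and $n \ge 1$. There exists a constant $C$, depending only on $n$ and $p$, such that for every finite collection of axis-parallel cubes $\{Q_k\}_{k=1}^K$ in $\mathbf{R}^n$ and every collection of nonnegative integrable functions $g_k$ with $\operatorname{supp} g_k \subseteq Q_k$, one has $\big\| \sum_{k=1}^K g_k \big\|_{L^p(\mathbf{R}^n)} \le C \, \big\| \sum_{k=1}^K \big( |Q_k|^{-1} \int_{Q_k} g_k(x)\,dx \big) \chi_{Q_k^*} \big\|_{L^p(\mathbf{R}^n)}$. -/

import Mathlib

open MeasureTheory Set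

noncomputable section

/-- The closed axis-parallel cube in `ℝⁿ` with center `c` and side length `l`. -/
def Cube {n : ℕ} (c : EuclideanSpace ℝ (Fin n)) (l : ℝ) : Set (EuclideanSpace ℝ (Fin n)) :=
  {x | ∀ i, x i ∈ Set.Icc (c i - l / 2) (c i + l / 2)}

/-
Let `F` be the sum of the averages of the `g k` times `χ_{Q k}`, let `G = ∑ g k`, and for `p < 1`
let `H` be the maximal function of the means of `F` of exponent `p - 1 < 0` over the cubes, so that
`H ^ (p - 1)` is at most the average of `F ^ (p - 1)` on each cube. Moving the averages from
`F ^ (p - 1)` to the `g k` gives `∫ G * H ^ (p - 1) ≤ ∫ F * F ^ (p - 1) = ∫ F ^ p`. Where the mean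
of `F` exceeds `t`, Chebyshev's inequality bounds `F` below by a multiple of `t` on half of the
cube, so the Vitali covering lemma gives `∫ H ^ p ≤ C * ∫ F ^ p`. Hölder's inequality applied to
`G ^ p = (G * H ^ (p - 1)) ^ p * (H ^ p) ^ (1 - p)` combines the two.
-/

open scoped ENNReal NNReal

lemma antitone_ennreal_rpow {r : ℝ} (hr : r ≤ 0) : Antitone fun x : ℝ≥0∞ => x ^ r := by
  intro x y hxy
  simpa only [ENNReal.rpow_neg, inv_inv] using
    ENNReal.inv_le_inv.2 (ENNReal.rpow_le_rpow hxy (neg_nonneg.2 hr))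

lemma ennreal_mul_rpow_sub_one_le {p : ℝ} (hp : 0 < p) (x : ℝ≥0∞) : x * x ^ (p - 1) ≤ x ^ p := by
  rcases eq_or_ne x 0 with rfl | hx0
  · simp
  rcases eq_or_ne x ∞ with rfl | hx
  · simp [hp]
  rw [← add_sub_cancel 1 p, ENNReal.rpow_add _ _ hx0 hx, ENNReal.rpow_one, add_sub_cancel]

lemma iSup_min_natCast_rpow {p : ℝ} (hp : 0 < p) (x : ℝ≥0∞) :
    ⨆ N : ℕ, min x N ^ p = x ^ p := by
  have h := (ENNReal.orderIsoRpow p hp).map_iSup fun N : ℕ => x ⊓ N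
  rw [← inf_iSup_eq, ENNReal.iSup_natCast, inf_top_eq] at h
  exact h.symm

lemma mul_indicator_one_nonneg {α : Type*} {b : ℝ} (hb : 0 ≤ b) (s : Set α) (x : α) :
    0 ≤ b * s.indicator 1 x :=
  mul_nonneg hb (indicator_nonneg (fun _ _ => zero_le_one) x)

section Measure

variable {α : Type*} [MeasurableSpace α] {μ : Measure α}

lemma lintegral_rpow_le_mul_of_meas_lt_le_of_ne_top {f h : α → ℝ≥0∞}
    (hf : AEMeasurable f μ) (hh : AEMeasurable h μ) (hf_top : ∀ x, f x ≠ ∞) (hh_top : ∀ x, h x ≠ ∞)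
    {A : ℝ≥0} {p : ℝ} (hp : 0 < p)
    (hle : ∀ t : ℝ≥0, 0 < t → μ {x | t < h x} ≤ A * μ {x | t ≤ f x}) :
    ∫⁻ x, h x ^ p ∂μ ≤ A * ∫⁻ x, f x ^ p ∂μ := by
  have lintegral_eq_toReal {u : α → ℝ≥0∞} (hu : ∀ x, u x ≠ ∞) :
      ∫⁻ x, u x ^ p ∂μ = ∫⁻ x, ENNReal.ofReal ((u x).toReal ^ p) ∂μ :=
    lintegral_congr fun x => by
      rw [ENNReal.toReal_rpow, ENNReal.ofReal_toReal (ENNReal.rpow_ne_top_of_nonneg hp.le (hu x))]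
  rw [lintegral_eq_toReal hh_top, lintegral_eq_toReal hf_top,
    lintegral_rpow_eq_lintegral_meas_lt_mul μ (.of_forall fun x => ENNReal.toReal_nonneg)
      hh.ennreal_toReal hp,
    lintegral_rpow_eq_lintegral_meas_le_mul μ (.of_forall fun x => ENNReal.toReal_nonneg)
      hf.ennreal_toReal hp,
    mul_left_comm, ← lintegral_const_mul' _ _ ENNReal.coe_ne_top]
  refine mul_le_mul_right (setLIntegral_mono' measurableSet_Ioi fun t (ht : 0 < t) => ?_) _
  lift t to ℝ≥0 using ht.le
  have setOf_lt : {x | (t : ℝ) < (h x).toReal} = {x | t < h x} := Set.ext fun x => by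
    simpa using (ENNReal.ofReal_lt_iff_lt_toReal t.coe_nonneg (hh_top x)).symm
  have setOf_le : {x | (t : ℝ) ≤ (f x).toReal} = {x | t ≤ f x} := Set.ext fun x => by
    simpa using (ENNReal.ofReal_le_iff_le_toReal (a := t) (hf_top x)).symm
  rw [← mul_assoc, setOf_lt, setOf_le]
  gcongr
  exact hle t (by exact_mod_cast ht)

lemma lintegral_rpow_le_mul_of_meas_lt_le {f h : α → ℝ≥0∞}
    (hf : AEMeasurable f μ) (hh : AEMeasurable h μ) {A : ℝ≥0} {p : ℝ} (hp : 0 < p)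
    (hle : ∀ t : ℝ≥0, 0 < t → μ {x | t < h x} ≤ A * μ {x | t ≤ f x}) :
    ∫⁻ x, h x ^ p ∂μ ≤ A * ∫⁻ x, f x ^ p ∂μ := by
  have truncated (N : ℕ) : ∫⁻ x, min (h x) N ^ p ∂μ ≤ A * ∫⁻ x, f x ^ p ∂μ := by
    calc ∫⁻ x, min (h x) N ^ p ∂μ ≤ A * ∫⁻ x, min (f x) N ^ p ∂μ := by
          refine lintegral_rpow_le_mul_of_meas_lt_le_of_ne_top (hf.min aemeasurable_const)
            (hh.min aemeasurable_const) (by simp) (by simp) hp fun t ht => ?_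
          rcases lt_or_ge (t : ℝ≥0∞) N with htN | htN
          · simpa [htN, htN.le] using hle t ht
          · simp [htN.not_gt]
      _ ≤ A * ∫⁻ x, f x ^ p ∂μ := by gcongr; exact min_le_left _ _
  simp_rw [← iSup_min_natCast_rpow hp (h _)]
  rw [lintegral_iSup' (fun N => (hh.min aemeasurable_const).pow_const p)
    (.of_forall fun x M N hMN => by dsimp only; gcongr)]
  exact iSup_le truncated

lemma lintegral_rpow_le_of_lintegral_mul_rpow_sub_one {f h : α → ℝ≥0∞}
    (hf : AEMeasurable f μ) (hh : AEMeasurable h μ) {p : ℝ} (hp0 : 0 < p) (hp1 : p < 1)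
    (hfh_top : ∫⁻ x, f x * h x ^ (p - 1) ∂μ ≠ ∞) (hh_top : ∫⁻ x, h x ^ p ∂μ ≠ ∞) :
    ∫⁻ x, f x ^ p ∂μ ≤
      (∫⁻ x, f x * h x ^ (p - 1) ∂μ) ^ p * (∫⁻ x, h x ^ p ∂μ) ^ (1 - p) := by
  have hfh : AEMeasurable (fun x => f x * h x ^ (p - 1)) μ := hf.mul (hh.pow_const _)
  refine le_trans (lintegral_mono_ae ?_) (ENNReal.lintegral_mul_norm_pow_le hfh (hh.pow_const p)
    hp0.le (sub_nonneg.2 hp1.le) (add_sub_cancel p 1))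
  filter_upwards [ae_lt_top' hfh hfh_top, ae_lt_top' (hh.pow_const p) hh_top] with x hfhx hhx
  rcases eq_or_ne (f x) 0 with hfx | hfx
  · simp [hfx, hp0]
  have hhx0 : h x ≠ 0 := fun h0 => by
    simp [h0, hfx, ENNReal.zero_rpow_of_neg (sub_neg.2 hp1)] at hfhx
  have hhx_top : h x ≠ ∞ := fun h_top => by simp [h_top, hp0] at hhx
  rw [ENNReal.mul_rpow_of_nonneg _ _ hp0.le, ← ENNReal.rpow_mul, ← ENNReal.rpow_mul, mul_assoc,
    ← ENNReal.rpow_add _ _ hhx0 hhx_top, show (p - 1) * p + p * (1 - p) = 0 by ring,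
    ENNReal.rpow_zero, mul_one]

lemma measure_le_two_mul_measure_inter_lt_of_setLAverage_le {s : Set α} (hs : μ s ≠ ∞)
    {f : α → ℝ≥0∞} (hf : Measurable f) {a : ℝ≥0∞} (ha0 : a ≠ 0) (ha_top : a ≠ ∞)
    (hfa : ⨍⁻ x in s, f x ∂μ ≤ a) :
    μ s ≤ 2 * μ (s ∩ {x | f x < 2 * a}) := by
  set E : Set α := {x | f x < 2 * a}
  have two_mul_diff_le : 2 * μ (s \ E) ≤ μ s := by
    refine (ENNReal.mul_le_mul_iff_right ha0 ha_top).1 ?_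
    calc a * (2 * μ (s \ E)) = ∫⁻ _ in s \ E, 2 * a ∂μ := by rw [setLIntegral_const]; ring
      _ ≤ ∫⁻ x in s \ E, f x ∂μ := setLIntegral_mono hf fun x hx => not_lt.1 hx.2
      _ ≤ ∫⁻ x in s, f x ∂μ := lintegral_mono_set sdiff_subset
      _ = (⨍⁻ x in s, f x ∂μ) * μ s := by rw [← measure_mul_setLAverage f hs, mul_comm]
      _ ≤ a * μ s := by gcongr
  have hsplit : μ (s ∩ E) + μ (s \ E) = μ s :=
    measure_inter_add_sdiff s (measurableSet_lt hf measurable_const)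
  have hdiff_top : μ (s \ E) ≠ ∞ := measure_ne_top_of_subset sdiff_subset hs
  have diff_le_inter : μ (s \ E) ≤ μ (s ∩ E) := by
    rwa [← hsplit, two_mul, ENNReal.add_le_add_iff_right hdiff_top] at two_mul_diff_le
  calc μ s = μ (s ∩ E) + μ (s \ E) := hsplit.symm
    _ ≤ 2 * μ (s ∩ E) := by rw [two_mul]; gcongr

/-- The power mean of `f` over `s` of exponent `r`. For `r < 0` it is controlled by the small values
of `f`, so that the associated maximal function is bounded on `L^p` for all `p > 0`. -/
def powerMean (μ : Measure α) (s : Set α) (r : ℝ) (f : α → ℝ≥0∞) : ℝ≥0∞ :=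
  (⨍⁻ x in s, f x ^ r ∂μ) ^ r⁻¹

lemma measure_le_two_mul_measure_inter_of_lt_powerMean {s : Set α} (hs : μ s ≠ ∞)
    {f : α → ℝ≥0∞} (hf : Measurable f) {r : ℝ} (hr : r < 0) {t : ℝ≥0∞} (ht0 : t ≠ 0)
    (ht : t < powerMean μ s r f) :
    μ s ≤ 2 * μ (s ∩ {x | t ≤ 2 ^ (-r⁻¹) * f x}) := by
  have rpow_ne_zero : t ^ r ≠ 0 := by simp [ENNReal.rpow_eq_zero_iff, ht0, ht.ne_top]
  have rpow_ne_top : t ^ r ≠ ∞ := by simp [ENNReal.rpow_eq_top_iff, ht0, ht.ne_top]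
  have setLAverage_le : ⨍⁻ x in s, f x ^ r ∂μ ≤ t ^ r :=
    calc ⨍⁻ x in s, f x ^ r ∂μ = powerMean μ s r f ^ r := (ENNReal.rpow_inv_rpow hr.ne _).symm
      _ ≤ t ^ r := antitone_ennreal_rpow hr.le ht.le
  refine (measure_le_two_mul_measure_inter_lt_of_setLAverage_le hs (hf.pow_const r)
    rpow_ne_zero rpow_ne_top setLAverage_le).trans ?_
  gcongr with x
  intro (hx : f x ^ r < 2 * t ^ r)
  calc t = 2 ^ (-r⁻¹) * (2 * t ^ r) ^ r⁻¹ := by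
        rw [ENNReal.mul_rpow_of_ne_top (by simp) rpow_ne_top, ENNReal.rpow_rpow_inv hr.ne,
          ← mul_assoc, ← ENNReal.rpow_add _ _ (by simp) (by simp), neg_add_cancel,
          ENNReal.rpow_zero, one_mul]
    _ ≤ 2 ^ (-r⁻¹) * (f x ^ r) ^ r⁻¹ := by
        gcongr 2 ^ (-r⁻¹) * ?_
        exact antitone_ennreal_rpow (inv_nonpos.2 hr.le) hx.le
    _ = 2 ^ (-r⁻¹) * f x := by rw [ENNReal.rpow_rpow_inv hr.ne]

/-- The maximal function of `f` formed from its power means of exponent `r` over the members of the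
family `Q`; it vanishes off `⋃ k, Q k`. -/
def powerMaximal (μ : Measure α) {ι : Type*} (Q : ι → Set α) (r : ℝ) (f : α → ℝ≥0∞) (x : α) :
    ℝ≥0∞ :=
  ⨆ k, (Q k).indicator (fun _ => powerMean μ (Q k) r f) x

/-- The conclusion of the Vitali covering lemma for the family `Q`: the union of any subfamily is
covered, in measure and up to the factor `A`, by finitely many disjoint members of it. -/
def HasVitaliConstant (μ : Measure α) {ι : Type*} (Q : ι → Set α) (A : ℝ≥0) : Prop :=
  ∀ T : Set ι, ∃ u : Finset ι, ↑u ⊆ T ∧ (u : Set ι).PairwiseDisjoint Q ∧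
    μ (⋃ k ∈ T, Q k) ≤ A * ∑ k ∈ u, μ (Q k)

/-- The function `∑ₖ (|Qₖ|⁻¹ ∫_{Qₖ} gₖ) χ_{Qₖ}` bounding `∑ₖ gₖ`, with values in `[0, ∞]`. -/
def sumAverages (μ : Measure α) {ι : Type*} [Fintype ι] (Q : ι → Set α) (g : ι → α → ℝ≥0∞)
    (x : α) : ℝ≥0∞ :=
  ∑ k, (Q k).indicator (fun _ => ⨍⁻ y in Q k, g k y ∂μ) x

variable {ι : Type*} {Q : ι → Set α} {A : ℝ≥0}

lemma measurable_powerMaximal [Countable ι] (hQ : ∀ k, MeasurableSet (Q k)) (r : ℝ)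
    (f : α → ℝ≥0∞) : Measurable (powerMaximal μ Q r f) :=
  .iSup fun k => measurable_const.indicator (hQ k)

lemma powerMean_le_powerMaximal {k : ι} {x : α} (hx : x ∈ Q k) (r : ℝ) (f : α → ℝ≥0∞) :
    powerMean μ (Q k) r f ≤ powerMaximal μ Q r f x :=
  le_iSup_of_le k (by rw [indicator_of_mem hx])

lemma setOf_lt_powerMaximal_subset (r : ℝ) (f : α → ℝ≥0∞) (t : ℝ≥0∞) :
    {x | t < powerMaximal μ Q r f x} ⊆ ⋃ k ∈ {k | t < powerMean μ (Q k) r f}, Q k := by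
  intro x (hx : t < ⨆ k, (Q k).indicator (fun _ => powerMean μ (Q k) r f) x)
  obtain ⟨k, hk⟩ := lt_iSup_iff.1 hx
  have hxk : x ∈ Q k := by
    by_contra hxk
    simp [hxk] at hk
  exact mem_biUnion (by simpa [hxk] using hk) hxk

lemma measure_lt_powerMaximal_le (hA : HasVitaliConstant μ Q A) (hQ : ∀ k, MeasurableSet (Q k))
    (hQ_top : ∀ k, μ (Q k) ≠ ∞) {f : α → ℝ≥0∞} (hf : Measurable f) {r : ℝ} (hr : r < 0)
    {t : ℝ≥0∞} (ht : t ≠ 0) :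
    μ {x | t < powerMaximal μ Q r f x} ≤ 2 * A * μ {x | t ≤ 2 ^ (-r⁻¹) * f x} := by
  set E : Set α := {x | t ≤ 2 ^ (-r⁻¹) * f x}
  have hE : MeasurableSet E := measurableSet_le measurable_const (hf.const_mul _)
  obtain ⟨u, hu, hu_disj, hu_cover⟩ := hA {k | t < powerMean μ (Q k) r f}
  calc μ {x | t < powerMaximal μ Q r f x}
      ≤ A * ∑ k ∈ u, μ (Q k) := (measure_mono (setOf_lt_powerMaximal_subset r f t)).trans hu_cover
    _ ≤ A * ∑ k ∈ u, 2 * μ (Q k ∩ E) := by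
        gcongr with k hk
        exact measure_le_two_mul_measure_inter_of_lt_powerMean (hQ_top k) hf hr ht (hu hk)
    _ = 2 * A * μ (⋃ k ∈ u, Q k ∩ E) := by
        rw [← Finset.mul_sum, measure_biUnion_finset
          (hu_disj.mono fun k => inter_subset_left) fun k _ => (hQ k).inter hE]
        ring
    _ ≤ 2 * A * μ E := by
        gcongr
        exact iUnion₂_subset fun k _ => inter_subset_right

lemma lintegral_powerMaximal_rpow_le [Countable ι] (hA : HasVitaliConstant μ Q A)
    (hQ : ∀ k, MeasurableSet (Q k)) (hQ_top : ∀ k, μ (Q k) ≠ ∞) {f : α → ℝ≥0∞}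
    (hf : Measurable f) {r : ℝ} (hr : r < 0) {p : ℝ} (hp : 0 < p) :
    ∫⁻ x, powerMaximal μ Q r f x ^ p ∂μ ≤ 2 ^ (1 - p / r) * A * ∫⁻ x, f x ^ p ∂μ := by
  have weak_type (t : ℝ≥0) (ht : 0 < t) : μ {x | t < powerMaximal μ Q r f x} ≤
      (2 * A : ℝ≥0) * μ {x | t ≤ 2 ^ (-r⁻¹) * f x} := by
    simpa using measure_lt_powerMaximal_le hA hQ hQ_top hf hr (ENNReal.coe_ne_zero.2 ht.ne')
  calc ∫⁻ x, powerMaximal μ Q r f x ^ p ∂μ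
      ≤ (2 * A : ℝ≥0) * ∫⁻ x, (2 ^ (-r⁻¹) * f x) ^ p ∂μ :=
        lintegral_rpow_le_mul_of_meas_lt_le (hf.const_mul _).aemeasurable
          (measurable_powerMaximal hQ r f).aemeasurable hp weak_type
    _ = 2 ^ (1 - p / r) * A * ∫⁻ x, f x ^ p ∂μ := by
        have two_rpow : (2 : ℝ≥0∞) ^ (1 - p / r) = 2 * (2 ^ (-r⁻¹)) ^ p := by
          rw [← ENNReal.rpow_mul, sub_eq_add_neg, ENNReal.rpow_add _ _ (by simp) (by simp),
            ENNReal.rpow_one]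
          congr 2
          ring
        simp_rw [ENNReal.mul_rpow_of_nonneg _ _ hp.le]
        rw [lintegral_const_mul _ (hf.pow_const p), two_rpow]
        push_cast
        ring

section Sum

variable [Fintype ι] {g : ι → α → ℝ≥0∞}

lemma measurable_sumAverages (hQ : ∀ k, MeasurableSet (Q k)) (g : ι → α → ℝ≥0∞) :
    Measurable (sumAverages μ Q g) :=
  Finset.measurable_fun_sum _ fun k _ => measurable_const.indicator (hQ k)

lemma lintegral_sum_indicator_mul (hQ : ∀ k, MeasurableSet (Q k)) (hg : ∀ k, AEMeasurable (g k) μ)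
    {f : α → ℝ≥0∞} (hf : Measurable f) :
    ∫⁻ x, (∑ k, (Q k).indicator (g k) x) * f x ∂μ = ∑ k, ∫⁻ x in Q k, g k x * f x ∂μ := by
  simp_rw [Finset.sum_mul, ← indicator_mul_left]
  rw [lintegral_finsetSum' (f := fun k => (Q k).indicator fun x => g k x * f x) _
    fun k _ => ((hg k).mul hf.aemeasurable).indicator (hQ k)]
  exact Finset.sum_congr rfl fun k _ => lintegral_indicator (hQ k) _

lemma lintegral_sum_indicator_mul_powerMaximal_rpow_le (hQ : ∀ k, MeasurableSet (Q k))
    (hg : ∀ k, AEMeasurable (g k) μ) {f : α → ℝ≥0∞} (hf : Measurable f) {r : ℝ} (hr : r < 0) :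
    ∫⁻ x, (∑ k, (Q k).indicator (g k) x) * powerMaximal μ Q r f x ^ r ∂μ ≤
      ∫⁻ x, sumAverages μ Q g x * f x ^ r ∂μ := by
  have rpow_le {k : ι} {x : α} (hx : x ∈ Q k) :
      powerMaximal μ Q r f x ^ r ≤ ⨍⁻ y in Q k, f y ^ r ∂μ :=
    (antitone_ennreal_rpow hr.le (powerMean_le_powerMaximal hx r f)).trans_eq
      (ENNReal.rpow_inv_rpow hr.ne _)
  calc ∫⁻ x, (∑ k, (Q k).indicator (g k) x) * powerMaximal μ Q r f x ^ r ∂μ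
      = ∑ k, ∫⁻ x in Q k, g k x * powerMaximal μ Q r f x ^ r ∂μ :=
        lintegral_sum_indicator_mul hQ hg ((measurable_powerMaximal hQ r f).pow_const r)
    _ ≤ ∑ k, ∫⁻ x in Q k, g k x * ⨍⁻ y in Q k, f y ^ r ∂μ ∂μ := by
        refine Finset.sum_le_sum fun k _ => setLIntegral_mono' (hQ k) fun x hx => ?_
        gcongr
        exact rpow_le hx
    _ = ∑ k, ∫⁻ x in Q k, (⨍⁻ y in Q k, g k y ∂μ) * f x ^ r ∂μ := by
        refine Finset.sum_congr rfl fun k _ => ?_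
        rw [lintegral_mul_const'' _ (hg k).restrict, lintegral_const_mul _ (hf.pow_const r),
          setLAverage_eq, setLAverage_eq, ENNReal.mul_comm_div, mul_div]
    _ = ∫⁻ x, sumAverages μ Q g x * f x ^ r ∂μ :=
        (lintegral_sum_indicator_mul hQ (fun _ => aemeasurable_const) (hf.pow_const r)).symm

lemma lintegral_sum_indicator_eq (hQ : ∀ k, MeasurableSet (Q k)) (hQ_top : ∀ k, μ (Q k) ≠ ∞)
    (hg : ∀ k, AEMeasurable (g k) μ) :
    ∫⁻ x, ∑ k, (Q k).indicator (g k) x ∂μ = ∫⁻ x, sumAverages μ Q g x ∂μ := by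
  have integral_sum {u : ι → α → ℝ≥0∞} (hu : ∀ k, AEMeasurable (u k) μ) :
      ∫⁻ x, ∑ k, (Q k).indicator (u k) x ∂μ = ∑ k, ∫⁻ x in Q k, u k x ∂μ := by
    simpa using lintegral_sum_indicator_mul hQ hu measurable_one
  simp_rw [sumAverages, integral_sum hg, integral_sum fun _ => aemeasurable_const,
    setLIntegral_const, mul_comm _ (μ _), measure_mul_setLAverage _ (hQ_top _)]

lemma lintegral_sum_indicator_rpow_le_of_lt_one (hA : HasVitaliConstant μ Q A) (hA0 : A ≠ 0)
    (hQ : ∀ k, MeasurableSet (Q k)) (hQ_top : ∀ k, μ (Q k) ≠ ∞)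
    (hg : ∀ k, AEMeasurable (g k) μ) {p : ℝ} (hp0 : 0 < p) (hp1 : p < 1) :
    ∫⁻ x, (∑ k, (Q k).indicator (g k) x) ^ p ∂μ ≤
      2 * A ^ (1 - p) * ∫⁻ x, sumAverages μ Q g x ^ p ∂μ := by
  set F := sumAverages μ Q g
  set H := powerMaximal μ Q (p - 1) F
  have hF : Measurable F := measurable_sumAverages hQ g
  have hr : p - 1 < 0 := sub_neg.2 hp1
  have hs : 0 < 1 - p := sub_pos.2 hp1
  rcases eq_or_ne (∫⁻ x, F x ^ p ∂μ) ∞ with hF_top | hF_top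
  · have : (A : ℝ≥0∞) ^ (1 - p) ≠ 0 := by simp [ENNReal.rpow_eq_zero_iff, hA0]
    simp [hF_top, ENNReal.mul_top, this]
  have hGH : ∫⁻ x, (∑ k, (Q k).indicator (g k) x) * H x ^ (p - 1) ∂μ ≤ ∫⁻ x, F x ^ p ∂μ :=
    (lintegral_sum_indicator_mul_powerMaximal_rpow_le hQ hg hF hr).trans
      (lintegral_mono fun x => ennreal_mul_rpow_sub_one_le hp0 (F x))
  have hH : ∫⁻ x, H x ^ p ∂μ ≤ 2 ^ (1 - p)⁻¹ * A * ∫⁻ x, F x ^ p ∂μ := by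
    have exponent : 1 - p / (p - 1) = (1 - p)⁻¹ := by grind
    exact exponent ▸ lintegral_powerMaximal_rpow_le hA hQ hQ_top hF hr hp0
  have hH_top : 2 ^ (1 - p)⁻¹ * A * ∫⁻ x, F x ^ p ∂μ ≠ ∞ := by finiteness
  calc ∫⁻ x, (∑ k, (Q k).indicator (g k) x) ^ p ∂μ
      ≤ (∫⁻ x, (∑ k, (Q k).indicator (g k) x) * H x ^ (p - 1) ∂μ) ^ p *
          (∫⁻ x, H x ^ p ∂μ) ^ (1 - p) :=
        lintegral_rpow_le_of_lintegral_mul_rpow_sub_one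
          (Finset.aemeasurable_fun_sum _ fun k _ => (hg k).indicator (hQ k))
          (measurable_powerMaximal hQ _ _).aemeasurable hp0 hp1 (ne_top_of_le_ne_top hF_top hGH)
          (ne_top_of_le_ne_top hH_top hH)
    _ ≤ (∫⁻ x, F x ^ p ∂μ) ^ p * (2 ^ (1 - p)⁻¹ * A * ∫⁻ x, F x ^ p ∂μ) ^ (1 - p) := by gcongr
    _ = 2 * A ^ (1 - p) * ∫⁻ x, F x ^ p ∂μ := by
        rw [ENNReal.mul_rpow_of_nonneg _ _ hs.le, ENNReal.mul_rpow_of_nonneg _ _ hs.le,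
          ENNReal.rpow_inv_rpow hs.ne', mul_left_comm,
          ← ENNReal.rpow_add_of_nonneg _ _ hp0.le hs.le, add_sub_cancel, ENNReal.rpow_one]

lemma lintegral_sum_indicator_rpow_le (hA : HasVitaliConstant μ Q A) (hA0 : A ≠ 0)
    (hQ : ∀ k, MeasurableSet (Q k)) (hQ_top : ∀ k, μ (Q k) ≠ ∞)
    (hg : ∀ k, AEMeasurable (g k) μ) {p : ℝ} (hp0 : 0 < p) (hp1 : p ≤ 1) :
    ∫⁻ x, (∑ k, (Q k).indicator (g k) x) ^ p ∂μ ≤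
      2 * A ^ (1 - p) * ∫⁻ x, sumAverages μ Q g x ^ p ∂μ := by
  rcases hp1.lt_or_eq with hp1 | rfl
  · exact lintegral_sum_indicator_rpow_le_of_lt_one hA hA0 hQ hQ_top hg hp0 hp1
  · simp only [ENNReal.rpow_one, sub_self, ENNReal.rpow_zero, mul_one,
      lintegral_sum_indicator_eq hQ hQ_top hg]
    exact le_mul_of_one_le_left' one_le_two

end Sum

section Real

variable [Fintype ι] {g : ι → α → ℝ}

lemma eLpNorm_eq_lintegral_ofReal_rpow {f : α → ℝ} (hf : ∀ x, 0 ≤ f x) {p : ℝ} (hp : 0 < p) :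
    eLpNorm f (ENNReal.ofReal p) μ = (∫⁻ x, ENNReal.ofReal (f x) ^ p ∂μ) ^ (1 / p) := by
  rw [eLpNorm_eq_lintegral_rpow_enorm_toReal (ENNReal.ofReal_pos.2 hp).ne' ENNReal.ofReal_ne_top,
    ENNReal.toReal_ofReal hp.le]
  simp_rw [Real.enorm_of_nonneg (hf _)]

lemma inv_measure_mul_setIntegral_nonneg {s : Set α} {f : α → ℝ} (hf : ∀ x, 0 ≤ f x) :
    0 ≤ (μ s).toReal⁻¹ * ∫ y in s, f y ∂μ :=
  mul_nonneg (inv_nonneg.2 ENNReal.toReal_nonneg) (integral_nonneg hf)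

lemma sumAverages_ofReal (hg0 : ∀ k x, 0 ≤ g k x) (hg : ∀ k, IntegrableOn (g k) (Q k) μ) (x : α) :
    sumAverages μ Q (fun k x => ENNReal.ofReal (g k x)) x =
      ENNReal.ofReal (∑ k, ((μ (Q k)).toReal⁻¹ * ∫ y in Q k, g k y ∂μ) *
        (Q k).indicator 1 x) := by
  rw [sumAverages, ENNReal.ofReal_sum_of_nonneg fun k _ =>
    mul_indicator_one_nonneg (inv_measure_mul_setIntegral_nonneg (hg0 k)) _ x]
  refine Finset.sum_congr rfl fun k _ => ?_
  by_cases hx : x ∈ Q k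
  · have h := ofReal_setAverage (hg k) (.of_forall (hg0 k))
    rw [setAverage_eq, ← setLAverage_eq] at h
    simpa [hx, measureReal_def] using h.symm
  · simp [hx]

lemma eLpNorm_sum_mul_indicator_mono {b : ι → ℝ} (hb : ∀ k, 0 ≤ b k) {E : ι → Set α}
    (hQE : ∀ k, Q k ⊆ E k) (p : ℝ≥0∞) :
    eLpNorm (fun x => ∑ k, b k * (Q k).indicator 1 x) p μ ≤
      eLpNorm (fun x => ∑ k, b k * (E k).indicator 1 x) p μ := by
  refine eLpNorm_mono_real fun x => ?_
  rw [Real.norm_of_nonneg (Finset.sum_nonneg fun k _ => mul_indicator_one_nonneg (hb k) _ x)]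
  refine Finset.sum_le_sum fun k _ => mul_le_mul_of_nonneg_left ?_ (hb k)
  exact indicator_le_indicator_of_subset (hQE k) (fun _ => zero_le_one) x

theorem eLpNorm_sum_le_eLpNorm_sum_average_mul_indicator (hA : HasVitaliConstant μ Q A)
    (hA0 : A ≠ 0) (hQ : ∀ k, MeasurableSet (Q k)) (hQ_top : ∀ k, μ (Q k) ≠ ∞)
    (hg0 : ∀ k x, 0 ≤ g k x) (hg : ∀ k, Integrable (g k) μ)
    (hgQ : ∀ k, Function.support (g k) ⊆ Q k) {p : ℝ} (hp0 : 0 < p) (hp1 : p ≤ 1) :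
    eLpNorm (fun x => ∑ k, g k x) (ENNReal.ofReal p) μ ≤
      ENNReal.ofReal ((2 * A ^ (1 - p)) ^ (1 / p)) *
        eLpNorm (fun x => ∑ k, ((μ (Q k)).toReal⁻¹ * ∫ y in Q k, g k y ∂μ) *
          (Q k).indicator 1 x) (ENNReal.ofReal p) μ := by
  have hs : 0 ≤ 1 - p := sub_nonneg.2 hp1
  have hip : 0 ≤ 1 / p := by positivity
  have averages_nonneg (x : α) : 0 ≤ ∑ k, ((μ (Q k)).toReal⁻¹ * ∫ y in Q k, g k y ∂μ) *
      (Q k).indicator 1 x :=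
    Finset.sum_nonneg fun k _ =>
      mul_indicator_one_nonneg (inv_measure_mul_setIntegral_nonneg (hg0 k)) _ x
  have ofReal_sum (x : α) : ENNReal.ofReal (∑ k, g k x) =
      ∑ k, (Q k).indicator (fun y => ENNReal.ofReal (g k y)) x := by
    rw [ENNReal.ofReal_sum_of_nonneg fun k _ => hg0 k x]
    refine Finset.sum_congr rfl fun k _ => ?_
    rw [indicator_eq_self.2 fun y hy => hgQ k fun h0 => hy (by simp [h0])]
  have ofReal_const : ENNReal.ofReal ((2 * A ^ (1 - p)) ^ (1 / p)) =
      (2 * (A : ℝ≥0∞) ^ (1 - p)) ^ (1 / p) := by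
    rw [← ENNReal.ofReal_rpow_of_nonneg (by positivity) hip, ENNReal.ofReal_mul zero_le_two,
      ← ENNReal.ofReal_rpow_of_nonneg A.coe_nonneg hs, ENNReal.ofReal_coe_nnreal,
      ENNReal.ofReal_ofNat]
  rw [eLpNorm_eq_lintegral_ofReal_rpow (fun x => Finset.sum_nonneg fun k _ => hg0 k x) hp0,
    eLpNorm_eq_lintegral_ofReal_rpow averages_nonneg hp0, ofReal_const,
    ← ENNReal.mul_rpow_of_nonneg _ _ hip]
  simp_rw [ofReal_sum, ← sumAverages_ofReal hg0 fun k => (hg k).integrableOn]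
  gcongr
  exact lintegral_sum_indicator_rpow_le hA hA0 hQ hQ_top
    (fun k => (hg k).aemeasurable.ennreal_ofReal) hp0 hp1

end Real

end Measure

section Cube

variable {n : ℕ}

lemma cube_eq_preimage_Icc (c : EuclideanSpace ℝ (Fin n)) (l : ℝ) :
    Cube c l = WithLp.ofLp ⁻¹' Icc (fun i => c i - l / 2) (fun i => c i + l / 2) := by
  ext x
  exact forall_and

lemma measurableSet_cube (c : EuclideanSpace ℝ (Fin n)) (l : ℝ) : MeasurableSet (Cube c l) := by
  rw [cube_eq_preimage_Icc]
  exact (PiLp.volume_preserving_ofLp (Fin n)).measurable measurableSet_Icc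

lemma volume_cube (c : EuclideanSpace ℝ (Fin n)) (l : ℝ) :
    volume (Cube c l) = ENNReal.ofReal l ^ n := by
  rw [cube_eq_preimage_Icc, (PiLp.volume_preserving_ofLp (Fin n)).measure_preimage
    measurableSet_Icc.nullMeasurableSet, Real.volume_Icc_pi]
  simp

lemma volume_cube_ne_top (c : EuclideanSpace ℝ (Fin n)) (l : ℝ) : volume (Cube c l) ≠ ∞ := by
  simp [volume_cube]

lemma mem_cube_self (c : EuclideanSpace ℝ (Fin n)) {l : ℝ} (hl : 0 ≤ l) : c ∈ Cube c l :=
  fun i => ⟨by linarith, by linarith⟩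

lemma cube_subset_cube (c : EuclideanSpace ℝ (Fin n)) {l m : ℝ} (hlm : l ≤ m) :
    Cube c l ⊆ Cube c m :=
  fun _ hx i => Icc_subset_Icc (by linarith) (by linarith) (hx i)

lemma cube_subset_cube_of_inter_nonempty {c d : EuclideanSpace ℝ (Fin n)} {l m : ℝ}
    (h : (Cube c l ∩ Cube d m).Nonempty) : Cube c l ⊆ Cube d (m + 2 * l) := by
  obtain ⟨y, hyc, hyd⟩ := h
  intro x hx i
  obtain ⟨⟨_, _⟩, ⟨_, _⟩, ⟨_, _⟩⟩ := And.intro (hx i) (And.intro (hyc i) (hyd i))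
  constructor <;> linarith

lemma hasVitaliConstant_cube {ι : Type*} [Finite ι] (c : ι → EuclideanSpace ℝ (Fin n))
    {l : ι → ℝ} (hl : ∀ k, 0 ≤ l k) :
    HasVitaliConstant volume (fun k => Cube (c k) (l k)) (5 ^ n) := by
  intro T
  obtain ⟨R, hR⟩ := (finite_range l).bddAbove
  obtain ⟨u, huT, hu_disj, hu⟩ := Vitali.exists_disjoint_subfamily_covering_enlargement
    (fun k => Cube (c k) (l k)) T l 2 one_lt_two (fun k _ => hl k) R
    (fun k _ => hR (mem_range_self k)) fun k _ => ⟨c k, mem_cube_self (c k) (hl k)⟩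
  lift u to Finset ι using u.toFinite
  refine ⟨u, huT, hu_disj, ?_⟩
  have cover : (⋃ k ∈ T, Cube (c k) (l k)) ⊆ ⋃ k ∈ u, Cube (c k) (5 * l k) := by
    refine iUnion₂_subset fun k hk => ?_
    obtain ⟨j, hj, hkj, hlkj⟩ := hu k hk
    exact (cube_subset_cube_of_inter_nonempty hkj).trans
      ((cube_subset_cube (c j) (by linarith)).trans
        (subset_biUnion_of_mem (u := fun k => Cube (c k) (5 * l k)) hj))
  calc volume (⋃ k ∈ T, Cube (c k) (l k))
      ≤ volume (⋃ k ∈ u, Cube (c k) (5 * l k)) := measure_mono cover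
    _ ≤ ∑ k ∈ u, volume (Cube (c k) (5 * l k)) := measure_biUnion_finset_le _ _
    _ = (5 ^ n : ℝ≥0) * ∑ k ∈ u, volume (Cube (c k) (l k)) := by
        simp_rw [Finset.mul_sum, volume_cube, ENNReal.ofReal_mul (Nat.ofNat_nonneg (α := ℝ) 5),
          mul_pow]
        simp

lemma cube_subset_cube_dilate (hn : 1 ≤ n) (c : EuclideanSpace ℝ (Fin n)) {l : ℝ} (hl : 0 ≤ l) :
    Cube c l ⊆ Cube c (2 * Real.sqrt n * l) := by
  have one_le_sqrt : 1 ≤ Real.sqrt n := Real.one_le_sqrt.2 (by exact_mod_cast hn)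
  exact cube_subset_cube c (le_mul_of_one_le_left hl (by linarith))

theorem stmt1_general {ι : Type*} [Fintype ι] {p : ℝ} (hp0 : 0 < p) (hp1 : p ≤ 1)
    (c : ι → EuclideanSpace ℝ (Fin n)) {l : ι → ℝ} (hl : ∀ k, 0 < l k)
    {g : ι → EuclideanSpace ℝ (Fin n) → ℝ} (hg0 : ∀ k x, 0 ≤ g k x)
    (hg : ∀ k, Integrable (g k)) (hgQ : ∀ k, Function.support (g k) ⊆ Cube (c k) (l k)) :
    eLpNorm (fun x => ∑ k, g k x) (ENNReal.ofReal p) volume ≤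
      ENNReal.ofReal ((2 * (5 ^ n) ^ (1 - p)) ^ (1 / p)) *
        eLpNorm (fun x => ∑ k,
          ((volume (Cube (c k) (l k))).toReal⁻¹ * ∫ y in Cube (c k) (l k), g k y) *
            (Cube (c k) (l k)).indicator 1 x)
          (ENNReal.ofReal p) volume := by
  simpa using eLpNorm_sum_le_eLpNorm_sum_average_mul_indicator
    (hasVitaliConstant_cube c fun k => (hl k).le) (by positivity) (fun k => measurableSet_cube _ _)
    (fun k => volume_cube_ne_top _ _) hg0 hg hgQ hp0 hp1

end Cube

/-- Lemma 1 of Grafakos–Kalton: for a finite collection of cubes `Q_k` and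
nonnegative integrable functions `g_k` supported in `Q_k`,
`‖∑ g_k‖_{L^p} ≤ C ‖∑ (|Q_k|⁻¹ ∫_{Q_k} g_k) χ_{Q_k^*}‖_{L^p}`, where `Q_k^*` is the
cube with the same center as `Q_k` and `2√n` times its side length. -/
theorem stmt1 (n : ℕ) (hn : 1 ≤ n) (p : ℝ) (hp0 : 0 < p) (hp1 : p ≤ 1) :
    ∃ C : ℝ, 0 < C ∧ ∀ (K : ℕ) (c : Fin K → EuclideanSpace ℝ (Fin n)) (l : Fin K → ℝ)
      (g : Fin K → EuclideanSpace ℝ (Fin n) → ℝ),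
      (∀ k, 0 < l k) →
      (∀ k, ∀ x, 0 ≤ g k x) →
      (∀ k, Integrable (g k)) →
      (∀ k, Function.support (g k) ⊆ Cube (c k) (l k)) →
      eLpNorm (fun x => ∑ k, g k x) (ENNReal.ofReal p) volume ≤
        ENNReal.ofReal C *
          eLpNorm (fun x => ∑ k,
            ((volume (Cube (c k) (l k))).toReal⁻¹ * ∫ y in Cube (c k) (l k), g k y) *
              (Cube (c k) (2 * Real.sqrt n * l k)).indicator 1 x)
            (ENNReal.ofReal p) volume := by
  refine ⟨(2 * (5 ^ n) ^ (1 - p)) ^ (1 / p), by positivity, fun K c l g hl hg0 hg hgQ => ?_⟩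
  exact (stmt1_general hp0 hp1 c hl hg0 hg hgQ).trans (mul_le_mul_right
    (eLpNorm_sum_mul_indicator_mono (fun k => inv_measure_mul_setIntegral_nonneg (hg0 k))
      (fun k => cube_subset_cube_dilate hn (c k) (hl k).le) _) _)

end
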